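/- arXiv:1201.4468 — 2 statements merged into one kernel-verified Lean document; each statement's English description precedes it below -/
import Mathlib

section
/- Let a ≥ 1 and 0 ≤ b < a be integers with gcd(a,b) = 1, let m ≥ 1 be an integer, and let c0 be an integer. For an integer c', let u(c') denote the binary word of length m whose k-th letter (0 ≤ k ≤ m−1) is ⌊(b(k+1)+c')/a⌋ − ⌊(bk+c')/a⌋. Then there exist integers c1 and c2 with 0 ≤ c1 ≤ c2 < a such that for every integer c', u(c') = u(c0) if and only if the residue of c' modulo a lies in the interval [c1, c2]. -/
/-- The `k`-th letter `⌊(b(k+1)+c)/a⌋ - ⌊(bk+c)/a⌋` of the word defined by the line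
`y = (b/a)x + c/a`. -/
noncomputable def lineLetter (a b c : ℤ) (k : ℕ) : ℤ :=
  ⌊((b * ((k : ℤ) + 1) + c : ℤ) : ℝ) / (a : ℝ)⌋ - ⌊((b * (k : ℤ) + c : ℤ) : ℝ) / (a : ℝ)⌋

/-!
A line with intercept residue `r ∈ [0, a)` has height `⌊r/a⌋ = 0` at abscissa `0`, so its word of
length `m` and its sequence of heights `⌊(bk+r)/a⌋`, `k ≤ m`, determine each other. The heights are
monotone in `r`, so a residue between two residues with the same heights has those heights too.
-/

open Set

theorem forall_lt_sub_eq_sub_iff {G : Type*} [AddGroup G] {f g : ℕ → G} (h0 : f 0 = g 0) (m : ℕ) :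
    (∀ k < m, f (k + 1) - f k = g (k + 1) - g k) ↔ EqOn f g (Iic m) := by
  refine ⟨fun h k => ?_, fun h k hk => by rw [h (mem_Iic.2 hk), h (mem_Iic.2 hk.le)]⟩
  induction k with
  | zero => exact fun _ => h0
  | succ k ih =>
    intro hk
    have hfg : f k = g k := ih (Nat.le_of_succ_le hk)
    simpa only [hfg, sub_left_inj] using h k hk

theorem ordConnected_setOf_eqOn {α β ι : Type*} [Preorder α] [PartialOrder β] {f : α → ι → β}
    (hf : Monotone f) (g : ι → β) (s : Set ι) : {x | EqOn (f x) g s}.OrdConnected :=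
  ⟨fun _ hx _ hy _ hz i hi =>
    le_antisymm ((hf hz.2 i).trans_eq (hy hi)) ((hx hi).symm.trans_le (hf hz.1 i))⟩

/-- The height at abscissa `k` of the discretized line `y = (b/a)x + c/a`. It is written with
integer division, which is the floor of the real quotient only for `0 ≤ a`. -/
def lineHeight (a b c : ℤ) (k : ℕ) : ℤ :=
  (b * k + c) / a

section

variable {a : ℤ} (b : ℤ)

theorem lineLetter_eq_lineHeight_sub (ha : 0 ≤ a) (c : ℤ) (k : ℕ) :
    lineLetter a b c k = lineHeight a b c (k + 1) - lineHeight a b c k := by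
  simp only [lineLetter, lineHeight, Int.floor_div_cast_of_nonneg ha, Int.floor_intCast,
    Nat.cast_succ]

theorem lineHeight_mono (ha : 0 < a) : Monotone (lineHeight a b) :=
  fun _ _ hcd _ => Int.ediv_le_ediv ha (by gcongr)

theorem lineHeight_zero_of_mem_Ico {r : ℤ} (hr : r ∈ Ico 0 a) : lineHeight a b r 0 = 0 := by
  simpa [lineHeight] using Int.ediv_eq_zero_of_lt hr.1 hr.2

theorem lineHeight_add_mul (ha : a ≠ 0) (c q : ℤ) (k : ℕ) :
    lineHeight a b (c + q * a) k = lineHeight a b c k + q := by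
  rw [lineHeight, ← add_assoc, Int.add_mul_ediv_right _ _ ha, lineHeight]

theorem lineLetter_emod (ha : 0 < a) (c : ℤ) (k : ℕ) :
    lineLetter a b (c % a) k = lineLetter a b c k := by
  conv_rhs => rw [← Int.emod_add_ediv_mul c a]
  simp only [lineLetter_eq_lineHeight_sub b ha.le, lineHeight_add_mul b ha.ne',
    add_sub_add_right_eq_sub]

theorem forall_lineLetter_eq_iff_eqOn_lineHeight {r s : ℤ} (hr : r ∈ Ico 0 a) (hs : s ∈ Ico 0 a)
    (m : ℕ) :
    (∀ k < m, lineLetter a b r k = lineLetter a b s k) ↔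
      EqOn (lineHeight a b r) (lineHeight a b s) (Iic m) := by
  have ha : 0 ≤ a := hr.1.trans hr.2.le
  have h0 : lineHeight a b r 0 = lineHeight a b s 0 := by
    rw [lineHeight_zero_of_mem_Ico b hr, lineHeight_zero_of_mem_Ico b hs]
  simp only [lineLetter_eq_lineHeight_sub b ha, forall_lt_sub_eq_sub_iff h0]

theorem ordConnected_setOf_forall_lineLetter_eq {s : ℤ} (hs : s ∈ Ico 0 a) (m : ℕ) :
    {r ∈ Ico 0 a | ∀ k < m, lineLetter a b r k = lineLetter a b s k}.OrdConnected := by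
  have ha : 0 < a := hs.1.trans_lt hs.2
  have heq : {r ∈ Ico 0 a | ∀ k < m, lineLetter a b r k = lineLetter a b s k} =
      Ico 0 a ∩ {r | EqOn (lineHeight a b r) (lineHeight a b s) (Iic m)} :=
    ext fun _ => and_congr_right fun hr => forall_lineLetter_eq_iff_eqOn_lineHeight b hr hs m
  rw [heq]
  exact ordConnected_Ico.inter (ordConnected_setOf_eqOn (lineHeight_mono b ha) _ _)

end

theorem same_word_interval_general {a : ℤ} (ha : 0 < a) (b : ℤ) (m : ℕ) (c0 : ℤ) :
    ∃ c1 c2 : ℤ, 0 ≤ c1 ∧ c1 ≤ c2 ∧ c2 < a ∧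
      ∀ c' : ℤ,
        (∀ k : ℕ, k < m → lineLetter a b c' k = lineLetter a b c0 k) ↔
          (c1 ≤ c' % a ∧ c' % a ≤ c2) := by
  have emod_mem (c : ℤ) : c % a ∈ Ico 0 a := ⟨Int.emod_nonneg c ha.ne', Int.emod_lt_of_pos c ha⟩
  let S : Set ℤ := {r ∈ Ico 0 a | ∀ k < m, lineLetter a b r k = lineLetter a b (c0 % a) k}
  have hS : S.Nonempty := ⟨c0 % a, emod_mem c0, fun _ _ => rfl⟩
  have hS_sub : S ⊆ Ico 0 a := sep_subset _ _
  have hS_below : BddBelow S := bddBelow_Ico.mono hS_sub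
  have hS_above : BddAbove S := bddAbove_Ico.mono hS_sub
  have hS_eq : S = Icc (sInf S) (sSup S) := (hS.ordConnected_iff_of_bdd hS_below hS_above).1
    (ordConnected_setOf_forall_lineLetter_eq b (emod_mem c0) m)
  refine ⟨sInf S, sSup S, (hS_sub (Int.csInf_mem hS hS_below)).1,
    csInf_le_csSup hS hS_below hS_above, (hS_sub (Int.csSup_mem hS hS_above)).2, fun c' => ?_⟩
  rw [← mem_Icc, ← hS_eq]
  simp only [S, mem_sep_iff, emod_mem, true_and, lineLetter_emod b ha]

/-- The lines `y = (b/a)x + c'/a` representing the same word of length `m` as the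
line with `c' = c0` are exactly those whose `c'` has residue mod `a` in an
interval `[c1, c2] ⊆ [0, a)`. -/
theorem same_word_interval (a b : ℤ) (ha : 1 ≤ a) (hb0 : 0 ≤ b) (hba : b < a)
    (hgcd : Int.gcd a b = 1) (m : ℕ) (hm : 1 ≤ m) (c0 : ℤ) :
    ∃ c1 c2 : ℤ, 0 ≤ c1 ∧ c1 ≤ c2 ∧ c2 < a ∧
      ∀ c' : ℤ,
        (∀ k : ℕ, k < m → lineLetter a b c' k = lineLetter a b c0 k) ↔
          (c1 ≤ c' % a ∧ c' % a ≤ c2) :=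
  same_word_interval_general ha b m c0
end

section
/- Let w = w_0 w_1 ⋯ w_{n−1} be a word over the alphabet {0,1}. Then w is a factor of some Sturmian infinite word if and only if there exist real numbers α ∈ (0,1) and ρ ∈ (0,1) such that w_k = ⌊(k+1)α + ρ⌋ − ⌊kα + ρ⌋ for all 0 ≤ k ≤ n−1. -/
/-- `w_k` equals `⌊(k+1)α+ρ⌋ - ⌊kα+ρ⌋` for all `k < |w|` (letter `true` stands for `1`). -/
def DefinesWord (α ρ : ℝ) (w : List Bool) : Prop :=
  ∀ k : ℕ, (h : k < w.length) →
    (if w.get ⟨k, h⟩ then (1 : ℤ) else 0) = ⌊((k : ℝ) + 1) * α + ρ⌋ - ⌊(k : ℝ) * α + ρ⌋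

/-- A finite Sturmian word. -/
def IsFiniteSturmian (w : List Bool) : Prop :=
  ∃ α ρ : ℝ, α ∈ Set.Ioo (0 : ℝ) 1 ∧ ρ ∈ Set.Ioo (0 : ℝ) 1 ∧ DefinesWord α ρ w

/-- `A n`, the set of finite Sturmian words of length `n`. -/
def sturmianWords (n : ℕ) : Set (List Bool) :=
  {w | w.length = n ∧ IsFiniteSturmian w}

/-- `(i,j)` is an integer point of the line `y = αx + ρ` (here `l = (α,ρ)`). -/
def IsIntegerPoint (l : ℝ × ℝ) (p : ℤ × ℤ) : Prop :=
  (p.2 : ℝ) = l.1 * p.1 + l.2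

/-- `Z_k(ℓ)`: the number of integer points `(i,j)` of `ℓ` with `0 ≤ i ≤ k`. -/
noncomputable def Zpts (k : ℝ) (l : ℝ × ℝ) : ℕ :=
  {p : ℤ × ℤ | 0 ≤ p.1 ∧ (p.1 : ℝ) ≤ k ∧ IsIntegerPoint l p}.ncard

/-- The set `S_n` of lines `(α,ρ)` with `α, ρ ∈ (0,1)`. -/
def Sset : Set (ℝ × ℝ) := Set.Ioo 0 1 ×ˢ Set.Ioo 0 1

/-- The set `L_n` of lines `(α,ρ)` with `α, ρ ∈ [0,1]` and `Z_n(ℓ) ≥ 2`. -/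
def Lset (n : ℕ) : Set (ℝ × ℝ) :=
  {l | l.1 ∈ Set.Icc (0 : ℝ) 1 ∧ l.2 ∈ Set.Icc (0 : ℝ) 1 ∧ 2 ≤ Zpts n l}

/-- The set `m(ℓ) ⊆ A_n`. -/
def mImage (n : ℕ) (l : ℝ × ℝ) : Set (List Bool) :=
  {w | w ∈ sturmianWords n ∧ ∃ l' : ℝ × ℝ, l' ∈ Sset ∧ DefinesWord l'.1 l'.2 w ∧
    (¬ ∃ p : ℤ × ℤ, 0 ≤ p.1 ∧ (p.1 : ℝ) ≤ n ∧
        min (l.1 * p.1 + l.2) (l'.1 * p.1 + l'.2) < (p.2 : ℝ) ∧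
        (p.2 : ℝ) < max (l.1 * p.1 + l.2) (l'.1 * p.1 + l'.2)) ∧
    (∃ p1 p2 : ℤ × ℤ, IsIntegerPoint l p1 ∧ IsIntegerPoint l p2 ∧
      0 ≤ p1.1 ∧ (p1.1 : ℝ) ≤ n / 2 ∧ (n / 2 : ℝ) < (p2.1 : ℝ) ∧ (p2.1 : ℝ) ≤ n ∧
      (p1.2 : ℝ) < l'.1 * p1.1 + l'.2 ∧ (p2.2 : ℝ) < l'.1 * p2.1 + l'.2)}

/-- The word `w` goes through the grid point `p = (i,j)`:
exactly `j` of the first `i` letters of `w` equal `1`. -/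
def GoesThrough (w : List Bool) (p : ℤ × ℤ) : Prop :=
  ((w.take p.1.toNat).count true : ℤ) = p.2

/-- The word `u` occurs in the infinite word `ω` at position `i`. -/
def OccursAt (u : List Bool) (ω : ℕ → Bool) (i : ℕ) : Prop :=
  ∀ k : ℕ, (h : k < u.length) → u.get ⟨k, h⟩ = ω (i + k)

/-- `u` is a factor of the infinite word `ω`. -/
def IsFactor (u : List Bool) (ω : ℕ → Bool) : Prop := ∃ i, OccursAt u ω i

/-- `ω` is a Sturmian infinite word: it has exactly `n+1` factors of length `n` for all `n`. -/
def IsSturmian (ω : ℕ → Bool) : Prop :=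
  ∀ n : ℕ, {u : List Bool | u.length = n ∧ IsFactor u ω}.ncard = n + 1

/-- `v` is a return word of `u` in `ω`. -/
def IsReturnWord (ω : ℕ → Bool) (u v : List Bool) : Prop :=
  v ≠ [] ∧ IsFactor (v ++ u) ω ∧ u <+: v ++ u ∧ u <:+ v ++ u ∧
    {i : ℕ | i + u.length ≤ (v ++ u).length ∧ u <+: (v ++ u).drop i}.ncard = 2

/-!
The factor complexity of a binary word grows by the number of right special factors, so a word is
Sturmian iff it has exactly one right special factor of each length. In a balanced word there is at
most one, and in an aperiodic word at least one. Conversely, if a Sturmian word were unbalanced, a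
shortest imbalance would give a palindrome `w` with factors `0w0` and `1w1`. The right special
factor of length `|w| + 1`, say `0w`, would start somewhere inside each factor of length `|w| + 2`,
but it cannot start inside `1w1`.

In a balanced word, the conditions that a line follow the word between positions `0` and `n` are
finitely many strict linear inequalities, and balance makes any two of them compatible. Conversely,
the slope of a line defining a finite word can be increased slightly to become irrational, and the
word of a line of irrational slope is balanced and aperiodic.
-/

section Factors

variable {A : Type*} {ω : ℕ → A} {n a b p q : ℕ}

/-- The factor of length `n` of the infinite word `ω` that starts at position `a`. Words of length
`n` are encoded as functions on `Fin n`, so that there are finitely many over a finite alphabet. -/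
def factorAt (ω : ℕ → A) (n a : ℕ) : Fin n → A := fun k => ω (a + k)

/-- The factor complexity of `ω`: its number of factors of length `n`. -/
noncomputable def factorComplexity (ω : ℕ → A) (n : ℕ) : ℕ := (Set.range (factorAt ω n)).ncard

/-- A factor `u` of `ω` is right special if it has occurrences in `ω` followed by different
letters. -/
def IsRightSpecial (ω : ℕ → A) (u : Fin n → A) : Prop :=
  ∃ a b, factorAt ω n a = u ∧ factorAt ω n b = u ∧ ω (a + n) ≠ ω (b + n)

/-- `ω` is periodic, with period `q - p`, from position `p` on. -/
def IsEventuallyPeriodic (ω : ℕ → A) : Prop := ∃ p q, p < q ∧ ∀ t, ω (p + t) = ω (q + t)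

theorem factorAt_succ_eq_snoc (ω : ℕ → A) (n a : ℕ) :
    factorAt ω (n + 1) a = Fin.snoc (α := fun _ => A) (factorAt ω n a) (ω (a + n)) :=
  (Fin.snoc_init_self (factorAt ω (n + 1) a)).symm

theorem tail_factorAt_succ (ω : ℕ → A) (n a : ℕ) :
    Fin.tail (factorAt ω (n + 1) a) = factorAt ω n (a + 1) :=
  funext fun k => congrArg ω (Nat.add_right_comm a k 1)

theorem factorAt_succ_eq_cons (ω : ℕ → A) (n a : ℕ) :
    factorAt ω (n + 1) a = Fin.cons (α := fun _ => A) (ω a) (factorAt ω n (a + 1)) := by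
  rw [← tail_factorAt_succ]
  exact (Fin.cons_self_tail (factorAt ω (n + 1) a)).symm

theorem IsRightSpecial.tail {u : Fin (n + 1) → A} (hu : IsRightSpecial ω u) :
    IsRightSpecial ω (Fin.tail u) := by
  obtain ⟨a, b, rfl, hb, hne⟩ := hu
  refine ⟨a + 1, b + 1, (tail_factorAt_succ ω n a).symm, ?_, ?_⟩
  · rw [← tail_factorAt_succ, hb]
  · rwa [Nat.add_right_comm a, Nat.add_right_comm b]

theorem factorAt_succ_eq_of_not_isRightSpecial (hab : factorAt ω n a = factorAt ω n b)
    (ha : ¬ IsRightSpecial ω (factorAt ω n a)) :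
    factorAt ω (n + 1) a = factorAt ω (n + 1) b := by
  have hnext : ω (a + n) = ω (b + n) := by
    by_contra hne
    exact ha ⟨a, b, rfl, hab.symm, hne⟩
  rw [factorAt_succ_eq_snoc, factorAt_succ_eq_snoc, hab, hnext]

/-- A factor that is not right special determines the next one, so the factors read from `p` and
from `q` on stay equal forever. -/
theorem isEventuallyPeriodic_of_forall_not_isRightSpecial (hpq : p < q)
    (heq : factorAt ω n p = factorAt ω n q)
    (hspecial : ∀ x, p ≤ x → x < q → ¬ IsRightSpecial ω (factorAt ω n x)) :
    IsEventuallyPeriodic ω := by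
  have next {x y} (hxy : factorAt ω n x = factorAt ω n y)
      (hx : ¬ IsRightSpecial ω (factorAt ω n x)) :
      ω x = ω y ∧ factorAt ω n (x + 1) = factorAt ω n (y + 1) := by
    have h := factorAt_succ_eq_of_not_isRightSpecial hxy hx
    rwa [factorAt_succ_eq_cons, factorAt_succ_eq_cons, Fin.cons_inj] at h
  have key (t : ℕ) : factorAt ω n (p + t) = factorAt ω n (q + t) ∧
      ¬ IsRightSpecial ω (factorAt ω n (p + t)) := by
    induction t using Nat.strong_induction_on with
    | _ t ih =>
      constructor
      · cases t with
        | zero => exact heq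
        | succ t => exact (next (ih t t.lt_succ_self).1 (ih t t.lt_succ_self).2).2
      · by_cases ht : p + t < q
        · exact hspecial _ (Nat.le_add_right p t) ht
        · obtain ⟨h, hns⟩ := ih (t - (q - p)) (by lia)
          rwa [h, show q + (t - (q - p)) = p + t by lia] at hns
  exact ⟨p, q, hpq, fun t => (next (key t).1 (key t).2).1⟩

theorem exists_isRightSpecial_factorAt [Finite A] (hω : ¬ IsEventuallyPeriodic ω) (n x : ℕ) :
    ∃ t < factorComplexity ω n, IsRightSpecial ω (factorAt ω n (x + t)) := by
  by_contra! hnone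
  obtain ⟨s, hs, t, ht, hst, heq⟩ :=
    Set.exists_ne_map_eq_of_ncard_lt_of_maps_to (t := Set.range (factorAt ω n))
      (s := (Finset.range (factorComplexity ω n + 1) : Set ℕ)) (f := fun t => factorAt ω n (x + t))
      (by rw [Set.ncard_coe_finset, Finset.card_range]; exact Nat.lt_succ_self _)
      (fun t _ => ⟨x + t, rfl⟩) (Set.toFinite _)
  wlog hlt : s < t generalizing s t
  · exact this t ht s hs hst.symm heq.symm (by lia)
  refine hω (isEventuallyPeriodic_of_forall_not_isRightSpecial (n := n) (Nat.add_lt_add_left hlt x)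
    heq fun y hxy hyt => ?_)
  rw [Finset.mem_coe, Finset.mem_range] at ht
  have hy := hnone (y - x) (by lia)
  rwa [show x + (y - x) = y by lia] at hy

theorem IsEventuallyPeriodic.exists_factorComplexity_le (hω : IsEventuallyPeriodic ω) :
    ∃ C, ∀ n, factorComplexity ω n ≤ C := by
  obtain ⟨p, q, hpq, hper⟩ := hω
  refine ⟨q, fun n => ?_⟩
  have hrep (t : ℕ) : ∃ s < q, factorAt ω n s = factorAt ω n t := by
    induction t using Nat.strong_induction_on with
    | _ t ih =>
      by_cases ht : t < q
      · exact ⟨t, ht, rfl⟩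
      obtain ⟨s, hs, h⟩ := ih (t - (q - p)) (by lia)
      refine ⟨s, hs, h.trans (funext fun k => ?_)⟩
      have := hper (t - q + k)
      rwa [show p + (t - q + k) = t - (q - p) + k by lia,
        show q + (t - q + k) = t + k by lia] at this
  have hsub : Set.range (factorAt ω n) ⊆ factorAt ω n '' (Finset.range q : Set ℕ) := by
    rintro _ ⟨t, rfl⟩
    obtain ⟨s, hs, h⟩ := hrep t
    exact ⟨s, Finset.mem_coe.2 (Finset.mem_range.2 hs), h⟩
  calc factorComplexity ω n
      ≤ (factorAt ω n '' (Finset.range q : Set ℕ)).ncard :=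
        Set.ncard_le_ncard hsub ((Finset.finite_toSet _).image _)
    _ ≤ (Finset.range q : Set ℕ).ncard := Set.ncard_image_le (Finset.finite_toSet _)
    _ = q := by rw [Set.ncard_coe_finset, Finset.card_range]

end Factors

section BinaryWords

variable {ω : ℕ → Bool} {n : ℕ}

theorem isRightSpecial_iff_forall_letter {u : Fin n → Bool} :
    IsRightSpecial ω u ↔ ∀ c, ∃ a, factorAt ω n a = u ∧ ω (a + n) = c := by
  constructor
  · rintro ⟨a, b, ha, hb, hne⟩ c
    by_cases hc : ω (a + n) = c
    · exact ⟨a, ha, hc⟩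
    · exact ⟨b, hb, (Bool.eq_not.2 hne.symm).trans (Bool.eq_not.2 (Ne.symm hc)).symm⟩
  · intro h
    obtain ⟨a, ha, hat⟩ := h true
    obtain ⟨b, hb, hbf⟩ := h false
    exact ⟨a, b, ha, hb, by simp [hat, hbf]⟩

/-- Each factor of length `n` is extended by at least one letter, and by both exactly if it is right
special. -/
theorem factorComplexity_succ (ω : ℕ → Bool) (n : ℕ) : factorComplexity ω (n + 1) =
    factorComplexity ω n + {u : Fin n → Bool | IsRightSpecial ω u}.ncard := by
  let extendedBy (c : Bool) : Set (Fin n → Bool) := {u | ∃ a, factorAt ω n a = u ∧ ω (a + n) = c}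
  let append (c : Bool) (u : Fin n → Bool) : Fin (n + 1) → Bool := Fin.snoc u c
  have hinj (c : Bool) : Function.Injective (append c) := fun u v h => (Fin.snoc_inj.1 h).1
  have hunion : extendedBy false ∪ extendedBy true = Set.range (factorAt ω n) := by
    ext u
    constructor
    · rintro (⟨a, rfl, -⟩ | ⟨a, rfl, -⟩) <;> exact ⟨a, rfl⟩
    · rintro ⟨a, rfl⟩
      cases h : ω (a + n)
      exacts [Or.inl ⟨a, rfl, h⟩, Or.inr ⟨a, rfl, h⟩]
  have hinter : extendedBy false ∩ extendedBy true = {u | IsRightSpecial ω u} := by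
    ext u
    exact (Bool.forall_bool.symm.trans isRightSpecial_iff_forall_letter.symm)
  have hrange : Set.range (factorAt ω (n + 1)) =
      append false '' extendedBy false ∪ append true '' extendedBy true := by
    ext v
    constructor
    · rintro ⟨a, rfl⟩
      rw [factorAt_succ_eq_snoc]
      cases h : ω (a + n)
      exacts [Or.inl ⟨_, ⟨a, rfl, h⟩, rfl⟩, Or.inr ⟨_, ⟨a, rfl, h⟩, rfl⟩]
    · rintro (⟨_, ⟨a, rfl, h⟩, rfl⟩ | ⟨_, ⟨a, rfl, h⟩, rfl⟩) <;>
        exact ⟨a, by rw [factorAt_succ_eq_snoc, h]⟩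
  have hdisj : Disjoint (append false '' extendedBy false) (append true '' extendedBy true) := by
    rw [Set.disjoint_left]
    rintro _ ⟨u, -, rfl⟩ ⟨v, -, h⟩
    exact Bool.noConfusion (Fin.snoc_inj.1 h).2
  rw [factorComplexity, factorComplexity, hrange, Set.ncard_union_eq hdisj,
    Set.ncard_image_of_injective _ (hinj _), Set.ncard_image_of_injective _ (hinj _),
    ← Set.ncard_union_add_ncard_inter, hunion, hinter]

theorem isSturmian_iff_factorComplexity : IsSturmian ω ↔ ∀ n, factorComplexity ω n = n + 1 := by
  refine forall_congr' fun n => ?_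
  have himage : {u : List Bool | u.length = n ∧ IsFactor u ω} =
      List.ofFn '' Set.range (factorAt ω n) := by
    ext u
    constructor
    · rintro ⟨rfl, i, hi⟩
      refine ⟨_, ⟨i, rfl⟩, List.ext_get (List.length_ofFn ..) fun k _ hk => ?_⟩
      rw [hi k hk, List.get_ofFn]
      rfl
    · rintro ⟨_, ⟨i, rfl⟩, rfl⟩
      exact ⟨List.length_ofFn, i, fun k hk => List.get_ofFn ..⟩
  rw [himage, Set.ncard_image_of_injective _ List.ofFn_injective, factorComplexity]

theorem isSturmian_iff_existsUnique_isRightSpecial :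
    IsSturmian ω ↔ ∀ n, ∃! u : Fin n → Bool, IsRightSpecial ω u := by
  have hunique (n : ℕ) : (∃! u : Fin n → Bool, IsRightSpecial ω u) ↔
      factorComplexity ω (n + 1) = factorComplexity ω n + 1 := by
    rw [factorComplexity_succ, Nat.add_left_cancel_iff, Set.ncard_eq_one]
    simp only [Set.eq_singleton_iff_unique_mem, Set.mem_ofPred_eq, ExistsUnique]
  have hzero : factorComplexity ω 0 = 1 := by
    rw [factorComplexity, Set.ncard_eq_one]
    exact ⟨factorAt ω 0 0, Set.eq_singleton_iff_unique_mem.2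
      ⟨⟨0, rfl⟩, fun _ _ => Subsingleton.elim _ _⟩⟩
  simp only [hunique, isSturmian_iff_factorComplexity]
  constructor
  · intro h n
    rw [h, h]
  · intro h n
    induction n with
    | zero => exact hzero
    | succ n ih => rw [h, ih]

theorem IsSturmian.not_isEventuallyPeriodic (hω : IsSturmian ω) : ¬ IsEventuallyPeriodic ω := by
  intro hper
  obtain ⟨C, hC⟩ := hper.exists_factorComplexity_le
  have := hC C
  rw [isSturmian_iff_factorComplexity.1 hω] at this
  exact Nat.not_succ_le_self C this

end BinaryWords

section Balance

variable {ω : ℕ → Bool} {n m i j : ℕ}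

/-- The number of letters `1` in the factor of length `m` of `ω` that starts at position `a`. -/
def countOnes (ω : ℕ → Bool) (a m : ℕ) : ℕ := Nat.count (fun k => ω (a + k)) m

/-- Any two factors of `ω` of equal length differ by at most one in their number of letters `1`. -/
def IsBalanced (ω : ℕ → Bool) : Prop := ∀ m i j, countOnes ω j m ≤ countOnes ω i m + 1

/-- The factor of length `n + 2` of `ω` that starts at position `x` is `c w c`. -/
structure IsFramedAt {A : Type*} (ω : ℕ → A) (c : A) (w : Fin n → A) (x : ℕ) : Prop where
  left : ω x = c
  middle : factorAt ω n (x + 1) = w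
  right : ω (x + (n + 1)) = c

/-- The factors of length `m` of `ω` at `i` and `j` violate balance, and `m` is least possible for
such a violation. -/
structure IsMinimalImbalance (ω : ℕ → Bool) (m i j : ℕ) : Prop where
  lt : countOnes ω i m + 1 < countOnes ω j m
  le_of_lt : ∀ k < m, ∀ a b, countOnes ω b k ≤ countOnes ω a k + 1

theorem countOnes_le (ω : ℕ → Bool) (a m : ℕ) : countOnes ω a m ≤ m := Nat.count_le _

theorem countOnes_add (ω : ℕ → Bool) (a m n : ℕ) :
    countOnes ω a (m + n) = countOnes ω a m + countOnes ω (a + m) n := by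
  simp only [countOnes, Nat.count_add, add_assoc]

theorem countOnes_one (ω : ℕ → Bool) (a : ℕ) : countOnes ω a 1 = (ω a).toNat := by
  rw [countOnes, Nat.count_succ, Nat.count_zero]
  cases ω a <;> rfl

theorem countOnes_succ (ω : ℕ → Bool) (a m : ℕ) :
    countOnes ω a (m + 1) = countOnes ω a m + (ω (a + m)).toNat := by
  rw [countOnes_add, countOnes_one]

theorem countOnes_congr (h : factorAt ω n i = factorAt ω n j) :
    countOnes ω i n = countOnes ω j n := by
  induction n with
  | zero => rfl
  | succ n ih =>
    rw [factorAt_succ_eq_snoc, factorAt_succ_eq_snoc, Fin.snoc_inj] at h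
    rw [countOnes_succ, countOnes_succ, ih h.1, h.2]

theorem countOnes_mul_of_forall_eq {p d : ℕ} (hper : ∀ t, ω (p + t) = ω (p + d + t)) (m : ℕ) :
    countOnes ω p (m * d) = m * countOnes ω p d := by
  have hshift (t : ℕ) : countOnes ω (p + d) t = countOnes ω p t :=
    countOnes_congr (funext fun k => (hper k).symm)
  induction m with
  | zero => simp [countOnes]
  | succ m ih => rw [Nat.succ_mul, add_comm, countOnes_add, hshift, ih, Nat.succ_mul, add_comm]

theorem IsFramedAt.countOnes_eq {c : Bool} {w : Fin n → Bool} (h : IsFramedAt ω c w i) :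
    countOnes ω i (n + 2) = countOnes ω (i + 1) n + 2 * c.toNat := by
  rw [countOnes_succ, h.right, add_comm n, countOnes_add, countOnes_one, h.left]
  ring

theorem IsBalanced.not_isFramedAt_false_true (hω : IsBalanced ω) {w : Fin n → Bool}
    (hi : IsFramedAt ω false w i) (hj : IsFramedAt ω true w j) : False := by
  have hw := countOnes_congr (hi.middle.trans hj.middle.symm)
  have hle := hω (n + 2) i j
  rw [hi.countOnes_eq, hj.countOnes_eq, hw, Bool.toNat_false, Bool.toNat_true] at hle
  lia

/-- The suffixes of two right special factors are right special, hence by induction equal; if the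
first letters were different, `0w` could be extended to `0w0` and `1w` to `1w1`. -/
theorem IsBalanced.isRightSpecial_unique (hω : IsBalanced ω) {u v : Fin n → Bool}
    (hu : IsRightSpecial ω u) (hv : IsRightSpecial ω v) : u = v := by
  induction n with
  | zero => exact Subsingleton.elim u v
  | succ n ih =>
    have htail : Fin.tail u = Fin.tail v := ih hu.tail hv.tail
    have exists_framed {z : Fin (n + 1) → Bool} (hz : IsRightSpecial ω z) :
        ∃ x, IsFramedAt ω (z 0) (Fin.tail z) x := by
      obtain ⟨x, rfl, hx⟩ := isRightSpecial_iff_forall_letter.1 hz (z 0)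
      exact ⟨x, rfl, (tail_factorAt_succ ω n x).symm, hx⟩
    obtain ⟨x, hx⟩ := exists_framed hu
    obtain ⟨y, hy⟩ := exists_framed hv
    rw [← htail] at hy
    have hhead : u 0 = v 0 := by
      revert hx hy
      generalize u 0 = c, v 0 = c'
      intro hx hy
      cases c <;> cases c'
      exacts [rfl, (hω.not_isFramedAt_false_true hx hy).elim,
        (hω.not_isFramedAt_false_true hy hx).elim, rfl]
    rw [← Fin.cons_self_tail u, ← Fin.cons_self_tail v, htail, hhead]

theorem IsBalanced.isSturmian (hω : IsBalanced ω) (haper : ¬ IsEventuallyPeriodic ω) :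
    IsSturmian ω := by
  refine isSturmian_iff_existsUnique_isRightSpecial.2 fun n => ?_
  obtain ⟨t, -, ht⟩ := exists_isRightSpecial_factorAt haper n 0
  exact ⟨_, ht, fun v hv => hω.isRightSpecial_unique hv ht⟩

theorem exists_isMinimalImbalance (hω : ¬ IsBalanced ω) : ∃ m i j, IsMinimalImbalance ω m i j := by
  classical
  have hex : ∃ m, ∃ i j, countOnes ω i m + 1 < countOnes ω j m := by
    simpa only [IsBalanced, not_forall, not_le] using hω
  obtain ⟨i, j, hlt⟩ := Nat.find_spec hex
  refine ⟨Nat.find hex, i, j, hlt, fun k hk a b => ?_⟩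
  have := Nat.find_min hex hk
  push Not at this
  exact this a b

theorem eq_of_toNat_eq {c d : Bool} (h : c.toNat = d.toNat) : c = d := by
  revert h
  cases c <;> cases d <;> decide

namespace IsMinimalImbalance

theorem countOnes_prefix (h : IsMinimalImbalance ω m i j) {k : ℕ} (hk : 0 < k) (hkm : k < m) :
    countOnes ω j k = countOnes ω i k + 1 := by
  have hlt := h.lt
  have hprefix := h.le_of_lt k hkm i j
  have hsuffix := h.le_of_lt (m - k) (by lia) (i + k) (j + k)
  rw [← Nat.add_sub_cancel' hkm.le, countOnes_add, countOnes_add] at hlt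
  lia

theorem countOnes_suffix (h : IsMinimalImbalance ω m i j) {k : ℕ} (hk : 0 < k) (hkm : k < m) :
    countOnes ω (j + (m - k)) k = countOnes ω (i + (m - k)) k + 1 := by
  have hlt := h.lt
  have hprefix := h.countOnes_prefix (k := m - k) (by lia) (by lia)
  have hsuffix := h.le_of_lt k hkm (i + (m - k)) (j + (m - k))
  rw [← Nat.sub_add_cancel hkm.le, countOnes_add, countOnes_add] at hlt
  lia

/-- Comparing each prefix with the suffix of the other factor leaves no room. -/
theorem countOnes_prefix_eq_suffix (h : IsMinimalImbalance ω m i j) {k : ℕ} (hk : 0 < k)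
    (hkm : k < m) : countOnes ω i k = countOnes ω (i + (m - k)) k := by
  have hprefix := h.countOnes_prefix hk hkm
  have hsuffix := h.countOnes_suffix hk hkm
  have h₁ := h.le_of_lt k hkm (i + (m - k)) j
  have h₂ := h.le_of_lt k hkm i (j + (m - k))
  lia

theorem two_le (h : IsMinimalImbalance ω m i j) : 2 ≤ m := by
  have := h.lt
  have := countOnes_le ω j m
  lia

theorem left_letters (h : IsMinimalImbalance ω m i j) : ω i = false ∧ ω j = true := by
  have hone := h.countOnes_prefix one_pos h.two_le
  rw [countOnes_one, countOnes_one] at hone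
  have := (ω j).toNat_le
  exact ⟨Bool.toNat_eq_zero.1 (by lia), Bool.toNat_eq_one.1 (by lia)⟩

theorem right_letters (h : IsMinimalImbalance ω m i j) :
    ω (i + (m - 1)) = false ∧ ω (j + (m - 1)) = true := by
  have hone := h.countOnes_suffix one_pos h.two_le
  rw [countOnes_one, countOnes_one] at hone
  have := (ω (j + (m - 1))).toNat_le
  exact ⟨Bool.toNat_eq_zero.1 (by lia), Bool.toNat_eq_one.1 (by lia)⟩

theorem middle_letters (h : IsMinimalImbalance ω m i j) {k : ℕ} (hk : 0 < k) (hkm : k + 1 < m) :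
    ω (i + k) = ω (j + k) := by
  have h₁ := h.countOnes_prefix hk (by lia)
  have h₂ := h.countOnes_prefix (Nat.add_one_pos k) hkm
  rw [countOnes_succ, countOnes_succ] at h₂
  exact eq_of_toNat_eq (by lia)

theorem middle_letters_rev (h : IsMinimalImbalance ω m i j) {k : ℕ} (hk : 0 < k) (hkm : k + 1 < m) :
    ω (i + (m - 1 - k)) = ω (i + k) := by
  have h₁ := h.countOnes_prefix_eq_suffix hk (by lia)
  have h₂ := h.countOnes_prefix_eq_suffix (Nat.add_one_pos k) hkm
  rw [countOnes_succ, show m - (k + 1) = m - 1 - k by lia, add_comm k 1, countOnes_add ω _ 1,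
    countOnes_one, add_assoc i, show m - 1 - k + 1 = m - k by lia, h₁] at h₂
  exact eq_of_toNat_eq (by lia)

end IsMinimalImbalance

theorem exists_palindrome_of_not_isBalanced (hω : ¬ IsBalanced ω) :
    ∃ (n : ℕ) (w : Fin n → Bool), w ∘ Fin.rev = w ∧ ∀ c, ∃ x, IsFramedAt ω c w x := by
  obtain ⟨m, i, j, h⟩ := exists_isMinimalImbalance hω
  obtain ⟨n, rfl⟩ := Nat.exists_eq_add_of_le' h.two_le
  refine ⟨n, factorAt ω n (i + 1), funext fun k => ?_, Bool.forall_bool.2 ⟨⟨i, ?_⟩, ⟨j, ?_⟩⟩⟩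
  · have hk := h.middle_letters_rev (Nat.add_one_pos k) (by lia)
    simpa only [Function.comp_apply, factorAt, Fin.val_rev, add_assoc, add_comm 1,
      show n - (k + 1) + 1 = n + 2 - 1 - (k + 1) by lia] using hk
  · exact ⟨h.left_letters.1, rfl, h.right_letters.1⟩
  · refine ⟨h.left_letters.2, funext fun k => ?_, h.right_letters.2⟩
    have hk := h.middle_letters (Nat.add_one_pos k) (by lia)
    simpa only [factorAt, add_assoc, add_comm 1] using hk.symm

/-- An occurrence of `c' w` overlapping `c w c` reads the final `c` where, by symmetry of `w`, it
should read its own first letter. -/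
theorem IsFramedAt.factorAt_ne_cons {A : Type*} {ω : ℕ → A} {c c' : A} {w : Fin n → A} {x t : ℕ}
    (h : IsFramedAt ω c w x) (hw : w ∘ Fin.rev = w) (hc : c' ≠ c) (ht : t ≤ n + 1) :
    factorAt ω (n + 1) (x + t) ≠ Fin.cons (α := fun _ => A) c' w := by
  intro heq
  have hfirst : ω (x + t) = c' := congrFun heq 0
  cases t with
  | zero => exact hc (hfirst.symm.trans h.left)
  | succ s =>
    obtain rfl | hs : s = n ∨ s < n := by lia
    · exact hc (hfirst.symm.trans h.right)
    have hlast : ω (x + (n + 1)) = w (Fin.rev ⟨s, hs⟩) := by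
      have := congrFun heq (Fin.rev ⟨s, hs⟩).succ
      rwa [Fin.cons_succ, factorAt, Fin.val_succ, Fin.val_rev,
        show x + (s + 1) + (n - (s + 1) + 1) = x + (n + 1) by lia] at this
    have hmiddle : ω (x + (s + 1)) = w ⟨s, hs⟩ := by
      rw [← h.middle, factorAt, add_assoc, add_comm 1]
    refine hc ?_
    rw [← hfirst, ← h.right, hmiddle, hlast]
    exact (congrFun hw _).symm

/-- Let `w` be a palindrome with `0w0` and `1w1` factors of `ω`. The right special factor of length
`|w| + 1` is some `c w`, and it has to occur early after the beginning of the factor `c' w c'` with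
`c' ≠ c`, which is impossible. -/
theorem IsSturmian.isBalanced (hω : IsSturmian ω) : IsBalanced ω := by
  by_contra hbal
  have hspecial := isSturmian_iff_existsUnique_isRightSpecial.1 hω
  obtain ⟨n, w, hpal, hframed⟩ := exists_palindrome_of_not_isBalanced hbal
  have hw : IsRightSpecial ω w := isRightSpecial_iff_forall_letter.2 fun c => by
    obtain ⟨x, hx⟩ := hframed c
    exact ⟨x + 1, hx.middle, by rw [add_assoc, add_comm 1, hx.right]⟩
  obtain ⟨u, hu, hunique⟩ := hspecial (n + 1)
  have htail : Fin.tail u = w := (hspecial n).unique hu.tail hw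
  obtain ⟨x, hx⟩ := hframed (!u 0)
  obtain ⟨t, ht, hxt⟩ :=
    exists_isRightSpecial_factorAt hω.not_isEventuallyPeriodic (n + 1) x
  rw [isSturmian_iff_factorComplexity.1 hω, Nat.lt_succ_iff] at ht
  refine hx.factorAt_ne_cons hpal (Bool.not_eq_not.2 rfl) ht ?_
  rw [hunique _ hxt, ← htail, Fin.cons_self_tail]

end Balance

section Lines

variable {ω : ℕ → Bool}

theorem exists_between_finset_families {α ι κ : Type*} [LinearOrder α] [DenselyOrdered α]
    [NoMinOrder α] [NoMaxOrder α] [Nonempty α] {s : Finset ι} {t : Finset κ} {f : ι → α} {g : κ → α}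
    (h : ∀ i ∈ s, ∀ j ∈ t, f i < g j) : ∃ m, (∀ i ∈ s, f i < m) ∧ ∀ j ∈ t, m < g j := by
  classical
  simpa only [Finset.forall_mem_image] using
    Order.exists_between_finsets (s.image f) (t.image g) (by simpa only [Finset.forall_mem_image])

/-- The Euclidean algorithm on the two lengths: cut a prefix of length `min a b` off the longer
factor, where balance compares it with the shorter one. -/
theorem IsBalanced.mul_countOnes_lt (hω : IsBalanced ω) {a b : ℕ} (ha : 0 < a) (hb : 0 < b)
    (x y : ℕ) : b * countOnes ω x a < a * countOnes ω y b + a + b := by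
  induction hN : a + b using Nat.strong_induction_on generalizing a b x y with
  | _ N ih =>
    obtain hab | rfl | hba := lt_trichotomy a b
    · obtain ⟨t, rfl⟩ := Nat.exists_eq_add_of_le hab.le
      have hrest := ih (a + t) (by lia) ha (show 0 < t by lia) x (y + a) rfl
      have hprefix := Nat.mul_le_mul_left a (hω a y x)
      rw [countOnes_add]
      linarith
    · have := Nat.mul_le_mul_left a (hω a y x)
      linarith
    · obtain ⟨t, rfl⟩ := Nat.exists_eq_add_of_le hba.le
      have hrest := ih (t + b) (by lia) (show 0 < t by lia) hb (x + b) y rfl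
      have hprefix := Nat.mul_le_mul_left b (hω b y x)
      rw [countOnes_add]
      linarith

theorem IsBalanced.exists_slope (hω : IsBalanced ω) (N : ℕ) :
    ∃ α ∈ Set.Ioo (0 : ℝ) 1, ∀ x a : ℕ, x + a ≤ N →
      (countOnes ω x a : ℝ) - 1 < a * α ∧ a * α < countOnes ω x a + 1 := by
  let s : Finset (ℕ × ℕ) := Finset.range (N + 1) ×ˢ Finset.Icc 1 (N + 1)
  obtain ⟨α, hlower, hupper⟩ := exists_between_finset_families (s := s) (t := s)
    (f := fun p => max (0 : ℝ) ((countOnes ω p.1 p.2 - 1) / p.2))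
    (g := fun p => min (1 : ℝ) ((countOnes ω p.1 p.2 + 1) / p.2)) (by
      rintro ⟨x, a⟩ hxa ⟨y, b⟩ hyb
      have ha : 0 < a := (Finset.mem_Icc.1 (Finset.mem_product.1 hxa).2).1
      have hb : 0 < b := (Finset.mem_Icc.1 (Finset.mem_product.1 hyb).2).1
      have hle : (countOnes ω x a : ℝ) ≤ a := mod_cast countOnes_le ω x a
      have hlt : (b * countOnes ω x a : ℝ) < a * countOnes ω y b + a + b :=
        mod_cast hω.mul_countOnes_lt ha hb x y
      rify at ha hb
      refine max_lt (lt_min one_pos (by positivity)) (lt_min ?_ ?_)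
      · rw [div_lt_one ha]
        linarith
      · rw [div_lt_div_iff₀ ha hb]
        linarith)
  simp only [max_lt_iff, lt_min_iff] at hlower hupper
  have hzero : (0, 1) ∈ s := by simp [s]
  refine ⟨α, ⟨(hlower _ hzero).1, (hupper _ hzero).1⟩, fun x a hxa => ?_⟩
  obtain rfl | ha := a.eq_zero_or_pos
  · simp [countOnes]
  have hmem : (x, a) ∈ s := by
    simp only [s, Finset.mem_product, Finset.mem_range, Finset.mem_Icc]
    lia
  rify at ha
  exact ⟨(div_lt_iff₀' ha).1 (hlower _ hmem).2, (lt_div_iff₀' ha).1 (hupper _ hmem).2⟩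

theorem IsBalanced.exists_line (hω : IsBalanced ω) (p n : ℕ) :
    ∃ α ρ : ℝ, α ∈ Set.Ioo (0 : ℝ) 1 ∧ ρ ∈ Set.Ioo (0 : ℝ) 1 ∧
      ∀ k ≤ n, ⌊(k : ℝ) * α + ρ⌋ = countOnes ω p k := by
  obtain ⟨α, hα, hslope⟩ := hω.exists_slope (p + n)
  obtain ⟨ρ, hlower, hupper⟩ := exists_between_finset_families
    (s := Finset.range (n + 1)) (t := Finset.range (n + 1))
    (f := fun k : ℕ => (countOnes ω p k - k * α : ℝ))
    (g := fun l : ℕ => (countOnes ω p l + 1 - l * α : ℝ)) (by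
      intro k hk l hl
      rw [Finset.mem_range, Nat.lt_succ_iff] at hk hl
      obtain hkl | hlk := le_total k l
      · obtain ⟨a, rfl⟩ := Nat.exists_eq_add_of_le hkl
        have := (hslope (p + k) a (by lia)).2
        rw [countOnes_add]
        push_cast
        linarith
      · obtain ⟨a, rfl⟩ := Nat.exists_eq_add_of_le hlk
        have := (hslope (p + l) a (by lia)).1
        rw [countOnes_add]
        push_cast
        linarith)
  simp only [Finset.mem_range, Nat.lt_succ_iff] at hlower hupper
  refine ⟨α, ρ, hα, ?_, fun k hk => ?_⟩
  · simpa [countOnes] using And.intro (hlower 0 n.zero_le) (hupper 0 n.zero_le)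
  · rw [Int.floor_eq_iff]
    push_cast
    exact ⟨by linarith [hlower k hk], by linarith [hupper k hk]⟩

theorem definesWord_iff_toNat {α ρ : ℝ} {w : List Bool} : DefinesWord α ρ w ↔
    ∀ k, (h : k < w.length) →
      ((w.get ⟨k, h⟩).toNat : ℤ) = ⌊((k : ℝ) + 1) * α + ρ⌋ - ⌊(k : ℝ) * α + ρ⌋ := by
  refine forall₂_congr fun k hk => ?_
  cases w.get ⟨k, hk⟩ <;> rfl

theorem IsBalanced.exists_definesWord (hω : IsBalanced ω) {w : List Bool} (hw : IsFactor w ω) :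
    ∃ α ρ : ℝ, α ∈ Set.Ioo (0 : ℝ) 1 ∧ ρ ∈ Set.Ioo (0 : ℝ) 1 ∧ DefinesWord α ρ w := by
  obtain ⟨p, hp⟩ := hw
  obtain ⟨α, ρ, hα, hρ, hline⟩ := hω.exists_line p w.length
  refine ⟨α, ρ, hα, hρ, definesWord_iff_toNat.2 fun k hk => ?_⟩
  have hnext := hline (k + 1) hk
  rw [Nat.cast_succ] at hnext
  rw [hnext, hline k hk.le, hp k hk, countOnes_succ, Nat.cast_add, add_sub_cancel_left]

end Lines

section MechanicalWords

variable {α ρ : ℝ}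

/-- The mechanical word of slope `α` and intercept `ρ`, with letters `⌊(k+1)α+ρ⌋ - ⌊kα+ρ⌋`. This
difference is `0` or `1` for `α ∈ [0, 1]`; in general it is encoded as `true` if positive. -/
noncomputable def mechanicalWord (α ρ : ℝ) (k : ℕ) : Bool :=
  decide (⌊(k : ℝ) * α + ρ⌋ < ⌊((k : ℝ) + 1) * α + ρ⌋)

theorem toNat_mechanicalWord (hα : α ∈ Set.Icc (0 : ℝ) 1) (ρ : ℝ) (k : ℕ) :
    ((mechanicalWord α ρ k).toNat : ℤ) = ⌊((k : ℝ) + 1) * α + ρ⌋ - ⌊(k : ℝ) * α + ρ⌋ := by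
  have hle : ⌊(k : ℝ) * α + ρ⌋ ≤ ⌊((k : ℝ) + 1) * α + ρ⌋ :=
    Int.floor_le_floor (by linarith [hα.1])
  have hge : ⌊((k : ℝ) + 1) * α + ρ⌋ ≤ ⌊(k : ℝ) * α + ρ⌋ + 1 := by
    rw [← Int.floor_add_one]
    exact Int.floor_le_floor (by linarith [hα.2])
  by_cases h : ⌊(k : ℝ) * α + ρ⌋ < ⌊((k : ℝ) + 1) * α + ρ⌋
  · rw [mechanicalWord, decide_eq_true h, Bool.toNat_true]
    lia
  · rw [mechanicalWord, decide_eq_false h, Bool.toNat_false]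
    lia

theorem countOnes_mechanicalWord (hα : α ∈ Set.Icc (0 : ℝ) 1) (ρ : ℝ) (i m : ℕ) :
    (countOnes (mechanicalWord α ρ) i m : ℤ) =
      ⌊((i + m : ℕ) : ℝ) * α + ρ⌋ - ⌊(i : ℝ) * α + ρ⌋ := by
  induction m with
  | zero => simp [countOnes]
  | succ m ih =>
    rw [countOnes_succ, Nat.cast_add, ih, toNat_mechanicalWord hα, ← add_assoc i, Nat.cast_succ]
    ring

theorem abs_countOnes_mechanicalWord_sub_lt_one (hα : α ∈ Set.Icc (0 : ℝ) 1) (ρ : ℝ) (i m : ℕ) :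
    |countOnes (mechanicalWord α ρ) i m - m * α| < 1 := by
  have hcount : (countOnes (mechanicalWord α ρ) i m : ℝ) =
      ⌊((i + m : ℕ) : ℝ) * α + ρ⌋ - ⌊(i : ℝ) * α + ρ⌋ :=
    mod_cast countOnes_mechanicalWord hα ρ i m
  rw [hcount, Nat.cast_add, abs_lt]
  constructor <;> linarith [Int.floor_le ((i : ℝ) * α + ρ), Int.lt_floor_add_one ((i : ℝ) * α + ρ),
    Int.floor_le ((i + m : ℝ) * α + ρ), Int.lt_floor_add_one ((i + m : ℝ) * α + ρ)]

theorem isBalanced_mechanicalWord (hα : α ∈ Set.Icc (0 : ℝ) 1) (ρ : ℝ) :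
    IsBalanced (mechanicalWord α ρ) := by
  intro m i j
  have hi := abs_lt.1 (abs_countOnes_mechanicalWord_sub_lt_one hα ρ i m)
  have hj := abs_lt.1 (abs_countOnes_mechanicalWord_sub_lt_one hα ρ j m)
  rw [← Nat.lt_succ_iff, Nat.succ_eq_add_one, ← Nat.cast_lt (α := ℝ)]
  push_cast
  linarith [hi.1, hj.2]

/-- The ones of an eventually periodic word have a rational density, which for a mechanical word is
its slope. -/
theorem not_isEventuallyPeriodic_mechanicalWord (hα : α ∈ Set.Icc (0 : ℝ) 1) (hirr : Irrational α)
    (ρ : ℝ) : ¬ IsEventuallyPeriodic (mechanicalWord α ρ) := by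
  rintro ⟨p, q, hpq, hper⟩
  obtain ⟨d, rfl⟩ := Nat.exists_eq_add_of_le hpq.le
  set c := countOnes (mechanicalWord α ρ) p d with hc
  have hne : (c : ℝ) - d * α ≠ 0 :=
    ((hirr.natCast_mul (by lia : d ≠ 0)).natCast_sub c).ne_zero
  obtain ⟨m, hm⟩ := exists_nat_gt |(c : ℝ) - d * α|⁻¹
  have hlt := abs_countOnes_mechanicalWord_sub_lt_one hα ρ p (m * d)
  rw [countOnes_mul_of_forall_eq hper, ← hc, Nat.cast_mul, Nat.cast_mul, mul_assoc, ← mul_sub,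
    abs_mul, Nat.abs_cast] at hlt
  exact hlt.not_gt ((inv_lt_iff_one_lt_mul₀ (abs_pos.2 hne)).1 hm)

theorem isSturmian_mechanicalWord (hα : α ∈ Set.Icc (0 : ℝ) 1) (hirr : Irrational α) (ρ : ℝ) :
    IsSturmian (mechanicalWord α ρ) :=
  (isBalanced_mechanicalWord hα ρ).isSturmian (not_isEventuallyPeriodic_mechanicalWord hα hirr ρ)

theorem DefinesWord.occursAt_mechanicalWord {w : List Bool} (h : DefinesWord α ρ w) :
    OccursAt w (mechanicalWord α ρ) 0 := by
  intro k hk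
  have hletter := definesWord_iff_toNat.1 h k hk
  rw [zero_add, Bool.eq_iff_iff, mechanicalWord, decide_eq_true_iff, ← sub_pos, ← hletter]
  cases w.get ⟨k, hk⟩ <;> decide

end MechanicalWords

section IrrationalSlopes

open Filter Topology

theorem eventually_floor_mul_add_eq_nhdsGT {c : ℝ} (hc : 0 ≤ c) (α ρ : ℝ) :
    ∀ᶠ β in 𝓝[>] α, ⌊c * β + ρ⌋ = ⌊c * α + ρ⌋ := by
  have hcont : Tendsto (fun β => c * β + ρ) (𝓝[>] α) (𝓝 (c * α + ρ)) :=
    (by fun_prop : Continuous fun β => c * β + ρ).continuousWithinAt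
  filter_upwards [hcont.eventually_lt_const (Int.lt_floor_add_one _), self_mem_nhdsWithin]
    with β hlt hαβ
  have hmul : c * α ≤ c * β := mul_le_mul_of_nonneg_left (le_of_lt hαβ) hc
  exact Int.floor_eq_iff.2 ⟨by linarith [Int.floor_le (c * α + ρ)], hlt⟩

theorem DefinesWord.eventually_nhdsGT {α ρ : ℝ} {w : List Bool} (h : DefinesWord α ρ w) :
    ∀ᶠ β in 𝓝[>] α, DefinesWord β ρ w := by
  have hfloor : ∀ᶠ β in 𝓝[>] α, ∀ k ∈ Finset.range (w.length + 1),
      ⌊(k : ℝ) * β + ρ⌋ = ⌊(k : ℝ) * α + ρ⌋ :=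
    (Finset.eventually_all _).2 fun k _ => eventually_floor_mul_add_eq_nhdsGT k.cast_nonneg α ρ
  filter_upwards [hfloor] with β hβ k hk
  have hnext := hβ (k + 1) (Finset.mem_range.2 (Nat.succ_lt_succ hk))
  rw [Nat.cast_succ] at hnext
  rw [h k hk, hnext, hβ k (Finset.mem_range.2 (Nat.lt_succ_of_lt hk))]

theorem frequently_irrational_nhdsGT (α : ℝ) : ∃ᶠ β in 𝓝[>] α, Irrational β := by
  refine (nhdsGT_basis α).frequently_iff.2 fun b hb => ?_
  obtain ⟨β, hirr, hαβ, hβb⟩ := exists_irrational_btwn hb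
  exact ⟨β, ⟨hαβ, hβb⟩, hirr⟩

theorem DefinesWord.exists_irrational {α ρ : ℝ} {w : List Bool} (h : DefinesWord α ρ w)
    (hα : α ∈ Set.Ioo (0 : ℝ) 1) : ∃ β ∈ Set.Ioo (0 : ℝ) 1, Irrational β ∧ DefinesWord β ρ w := by
  obtain ⟨β, hirr, hβ, hαβ⟩ := ((frequently_irrational_nhdsGT α).and_eventually
    (h.eventually_nhdsGT.and (Ioo_mem_nhdsGT hα.2))).exists
  exact ⟨β, ⟨hα.1.trans hαβ.1, hαβ.2⟩, hirr, hβ⟩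

end IrrationalSlopes

/-- A binary word is a factor of some Sturmian infinite word iff it is defined by
some line `y = αx + ρ` with `α, ρ ∈ (0,1)`. -/
theorem factor_of_sturmian_iff (w : List Bool) :
    (∃ ω : ℕ → Bool, IsSturmian ω ∧ IsFactor w ω) ↔
      ∃ α ρ : ℝ, α ∈ Set.Ioo (0 : ℝ) 1 ∧ ρ ∈ Set.Ioo (0 : ℝ) 1 ∧
        DefinesWord α ρ w := by
  constructor
  · rintro ⟨ω, hω, hw⟩
    exact hω.isBalanced.exists_definesWord hw
  · rintro ⟨α, ρ, hα, -, hw⟩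
    obtain ⟨β, hβ, hirr, hwβ⟩ := hw.exists_irrational hα
    exact ⟨mechanicalWord β ρ, isSturmian_mechanicalWord (Set.Ioo_subset_Icc_self hβ) hirr ρ, 0,
      hwβ.occursAt_mechanicalWord⟩
end
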